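/- Let K be a field, let A = K[[t₁,...,tₙ]]/I be a quotient of a formal power series ring, a complete noetherian local ring with maximal ideal m, and let I(A) be an injective hull of A/m as an A-module. Then the functor M ↦ Hom_A(M, I(A)) gives an anti-equivalence between the category of finitely generated A-modules and the category of artinian A-modules. -/

import Mathlib

/-!
Call a module reflexive when its biduality map with respect to the hull `E` is bijective. Since `E`
is an injective cogenerator, biduality maps are always injective, and reflexivity passes to
submodules, quotients, extensions and finite powers. The residue field is reflexive, because all its
functionals are multiples of its embedding in `E`; hence so are all modules of finite length, in
particular the `R ⧸ m ^ n`. A functional `ψ` on `Hom(R, E)` is therefore, on the functionals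
killing `m ^ n`, evaluation at some `a n : R`. These elements form a Cauchy sequence, and by
completeness `ψ` is evaluation at its limit: every functional on `R` kills some `m ^ n`, by Krull's
intersection theorem and essentiality. So `R` is reflexive, and so is its dual `E`. Finite modules
are quotients of some `R ^ n`, artinian modules are submodules of some `E ^ n`, so both are
reflexive. The chain conditions are exchanged because `S ↦ {x | ∀ φ ∈ S, φ x = 0}` is strictly
antitone on the submodules of the dual of a reflexive module.
-/

open IsLocalRing Function

namespace Matlis

section Ring

variable {R M N E : Type*} [Ring R] [AddCommGroup M] [Module R M] [AddCommGroup N] [Module R N]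
  [AddCommGroup E] [Module R E]

lemma exists_comp_eq_of_ker_le (hE : Module.Baer R E) (f : M →ₗ[R] N) (φ : M →ₗ[R] E)
    (h : LinearMap.ker f ≤ LinearMap.ker φ) : ∃ g : N →ₗ[R] E, g ∘ₗ f = φ := by
  obtain ⟨g, hg⟩ := hE.extension_property ((LinearMap.ker f).liftQ f le_rfl)
    (LinearMap.ker_eq_bot.mp (Submodule.ker_liftQ_eq_bot _ _ _ le_rfl))
    ((LinearMap.ker f).liftQ φ h)
  exact ⟨g, LinearMap.ext fun x ↦ by simpa using LinearMap.congr_fun hg (Submodule.Quotient.mk x)⟩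

/-- `f : M → E` is an injective hull of `M`: the module `E` is injective, stated through Baer's
criterion so as not to fix a universe of test modules, and `f` embeds `M` in `E` as an essential
submodule. -/
structure IsInjectiveHull (f : M →ₗ[R] E) : Prop where
  baer : Module.Baer R E
  injective : Injective f
  eq_bot_of_disjoint : ∀ N : Submodule R E, Disjoint (LinearMap.range f) N → N = ⊥

lemma isInjectiveHull_of_forall_exists_mem_range {f : M →ₗ[R] E} (hE : Module.Baer R E)
    (hf : Injective f) (h : ∀ N : Submodule R E, N ≠ ⊥ → ∃ y ≠ 0, y ∈ N ∧ y ∈ LinearMap.range f) :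
    IsInjectiveHull f := by
  refine ⟨hE, hf, fun N hN ↦ ?_⟩
  by_contra hne
  obtain ⟨y, hy0, hyN, hyf⟩ := h N hne
  exact hy0 (Submodule.disjoint_def.mp hN y hyf hyN)

lemma IsInjectiveHull.isAtom_range [IsSimpleModule R M] {f : M →ₗ[R] E} (hf : IsInjectiveHull f) :
    IsAtom (LinearMap.range f) :=
  have := IsSimpleModule.congr (LinearEquiv.ofInjective f hf.injective).symm
  IsSimpleModule.isAtom

lemma IsInjectiveHull.range_le [IsSimpleModule R M] {f : M →ₗ[R] E} (hf : IsInjectiveHull f)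
    {N : Submodule R E} (hN : N ≠ ⊥) : LinearMap.range f ≤ N :=
  hf.isAtom_range.not_disjoint_iff_le.mp fun h ↦ hN (hf.eq_bot_of_disjoint N h)

lemma IsInjectiveHull.range_le_range [IsSimpleModule R M] {f : M →ₗ[R] E}
    (hf : IsInjectiveHull f) (φ : M →ₗ[R] E) : LinearMap.range φ ≤ LinearMap.range f := by
  rcases φ.injective_or_eq_zero with hφ | rfl
  · have := IsSimpleModule.congr (LinearEquiv.ofInjective φ hφ).symm
    have hatom : IsAtom (LinearMap.range φ) := IsSimpleModule.isAtom
    exact ((hatom.le_iff_eq hf.isAtom_range.1).mp (hf.range_le hatom.1)).ge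
  · simp

end Ring

section Biduality

variable {R M N Q E : Type*} [CommRing R] [AddCommGroup M] [Module R M] [AddCommGroup N]
  [Module R N] [AddCommGroup Q] [Module R Q] [AddCommGroup E] [Module R E]

variable (R M E) in
/-- The biduality map `M → Hom(Hom(M, E), E)`, sending `x` to the evaluation `φ ↦ φ x`. -/
abbrev biduality : M →ₗ[R] (M →ₗ[R] E) →ₗ[R] E := LinearMap.applyₗ

lemma bijective_biduality_iff : Bijective (biduality R M E) ↔
    (∀ ψ : (M →ₗ[R] E) →ₗ[R] E, ∃ x : M, ∀ φ, ψ φ = φ x) ∧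
      ∀ x y : M, (∀ φ : M →ₗ[R] E, φ x = φ y) → x = y := by
  rw [Bijective, and_comm]
  refine and_congr (forall_congr' fun ψ ↦ exists_congr fun x ↦ ?_)
    (forall₂_congr fun x y ↦ imp_congr_left LinearMap.ext_iff)
  rw [eq_comm, LinearMap.ext_iff]
  rfl

lemma surjective_biduality_of_surjective (hE : Module.Baer R E) {f : M →ₗ[R] N}
    (hf : Surjective f) (hM : Surjective (biduality R M E)) : Surjective (biduality R N E) := by
  intro ψ
  obtain ⟨χ, rfl⟩ := hE.extension_property (f.lcomp R E)
    (LinearMap.lcomp_injective_of_surjective f hf) ψ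
  obtain ⟨x, rfl⟩ := hM χ
  exact ⟨f x, rfl⟩

lemma surjective_biduality_of_exact (hE : Module.Baer R E) {f : N →ₗ[R] M} {g : M →ₗ[R] Q}
    (hfg : Exact f g) (hg : Surjective g) (hN : Surjective (biduality R N E))
    (hQ : Surjective (biduality R Q E)) : Surjective (biduality R M E) := by
  intro ψ
  obtain ⟨z, hz⟩ := hQ (ψ ∘ₗ g.lcomp R E)
  obtain ⟨x, rfl⟩ := hg z
  have hker : LinearMap.ker (f.lcomp R E) ≤ LinearMap.ker (ψ - biduality R M E x) := by
    intro φ hφ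
    obtain ⟨φ', rfl⟩ := exists_comp_eq_of_ker_le hE g φ <| by
      rw [hfg.linearMap_ker_eq]
      exact LinearMap.range_le_ker_iff.mpr hφ
    exact sub_eq_zero.mpr (LinearMap.congr_fun hz φ').symm
  obtain ⟨χ, hχ⟩ := exists_comp_eq_of_ker_le hE (f.lcomp R E) _ hker
  obtain ⟨y, rfl⟩ := hN χ
  refine ⟨x + f y, ?_⟩
  rw [map_add, ← eq_sub_iff_add_eq', ← hχ]
  rfl

lemma surjective_biduality_pi {ι : Type*} [Finite ι] (hM : Surjective (biduality R M E)) :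
    Surjective (biduality R (ι → M) E) := by
  classical
  have := Fintype.ofFinite ι
  intro ψ
  choose x hx using fun i ↦ hM (ψ ∘ₗ (LinearMap.proj i : (ι → M) →ₗ[R] M).lcomp R E)
  refine ⟨x, LinearMap.ext fun φ ↦ ?_⟩
  let φ' (i : ι) : M →ₗ[R] E := φ ∘ₗ LinearMap.single R (fun _ ↦ M) i
  have hφ : φ = ∑ i, φ' i ∘ₗ LinearMap.proj i := by
    refine LinearMap.ext fun y ↦ ?_
    conv_lhs => rw [← LinearMap.sum_single_apply _ y, map_sum]
    simp [φ']
  calc φ x = ∑ i, φ' i (x i) := by simpa using LinearMap.congr_fun hφ x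
    _ = ∑ i, ψ (φ' i ∘ₗ LinearMap.proj i) :=
      Finset.sum_congr rfl fun i _ ↦ LinearMap.congr_fun (hx i) (φ' i)
    _ = ψ φ := by rw [← map_sum, ← hφ]

lemma surjective_biduality_dual (hM : Surjective (biduality R M E)) :
    Surjective (biduality R (M →ₗ[R] E) E) := by
  refine fun χ ↦ ⟨χ ∘ₗ biduality R M E, LinearMap.ext fun ψ ↦ ?_⟩
  obtain ⟨x, rfl⟩ := hM ψ
  rfl

end Biduality

section Cogenerator

variable {R M N E : Type*} [CommRing R] [AddCommGroup M] [Module R M] [AddCommGroup N] [Module R N]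
  [AddCommGroup E] [Module R E]

variable (R E) in
/-- `E` is an injective cogenerator: it is injective and contains a copy of every simple module.
Injectivity is stated through Baer's criterion, and simple modules are taken of the form `R ⧸ m`,
so as not to fix a universe of test modules. -/
structure IsInjectiveCogenerator : Prop where
  baer : Module.Baer R E
  exists_injective : ∀ m : Ideal R, m.IsMaximal → ∃ e : (R ⧸ m) →ₗ[R] E, Injective e

/-- The submodule of `M` on which all functionals in `S` vanish. -/
def coannihilator (S : Submodule R (M →ₗ[R] E)) : Submodule R M := ⨅ φ ∈ S, LinearMap.ker φ

lemma mem_coannihilator {S : Submodule R (M →ₗ[R] E)} {x : M} :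
    x ∈ coannihilator S ↔ ∀ φ ∈ S, φ x = 0 := by
  simp [coannihilator]

namespace IsInjectiveCogenerator

lemma injective_biduality (hE : IsInjectiveCogenerator R E) : Injective (biduality R M E) := by
  refine (injective_iff_map_eq_zero _).mpr fun x hx ↦ ?_
  by_contra hx0
  have hker : LinearMap.ker (LinearMap.toSpanSingleton R M x) ≠ ⊤ := fun h ↦
    hx0 (by simpa using (Ideal.eq_top_iff_one _).mp h)
  obtain ⟨m, hm, hle⟩ := Ideal.exists_le_maximal _ hker
  obtain ⟨e, he⟩ := hE.exists_injective m hm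
  obtain ⟨φ, hφ⟩ := exists_comp_eq_of_ker_le hE.baer (LinearMap.toSpanSingleton R M x)
    (e ∘ₗ m.mkQ) fun r hr ↦ by
      simp [Ideal.Quotient.eq_zero_iff_mem.mpr (hle hr)]
  have e_one : e (m.mkQ 1) = 0 := by
    have h : φ x = e (m.mkQ 1) := by simpa using LinearMap.congr_fun hφ 1
    exact h ▸ LinearMap.congr_fun hx φ
  exact hm.ne_top ((Ideal.eq_top_iff_one m).mpr
    ((Submodule.Quotient.mk_eq_zero m).mp ((map_eq_zero_iff e he).mp e_one)))

lemma mem_of_forall_apply_eq_zero (hE : IsInjectiveCogenerator R E) {S : Submodule R M} {x : M}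
    (hx : ∀ φ : M →ₗ[R] E, S ≤ LinearMap.ker φ → φ x = 0) : x ∈ S := by
  refine (Submodule.Quotient.mk_eq_zero S).mp (hE.injective_biduality ?_)
  refine (LinearMap.ext fun φ ↦ hx (φ ∘ₗ S.mkQ) fun y hy ↦ ?_).trans (map_zero _).symm
  simp [(Submodule.Quotient.mk_eq_zero S).mpr hy]

lemma surjective_biduality_of_injective (hE : IsInjectiveCogenerator R E) {f : M →ₗ[R] N}
    (hf : Injective f) (hN : Surjective (biduality R N E)) : Surjective (biduality R M E) := by
  intro ψ
  obtain ⟨y, hy⟩ := hN (ψ ∘ₗ f.lcomp R E)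
  have hyf (φ : N →ₗ[R] E) : φ y = ψ (φ ∘ₗ f) := LinearMap.congr_fun hy φ
  obtain ⟨x, rfl⟩ : y ∈ LinearMap.range f := hE.mem_of_forall_apply_eq_zero fun φ hφ ↦ by
    rw [hyf, LinearMap.range_le_ker_iff.mp hφ, map_zero]
  refine ⟨x, LinearMap.ext fun φ ↦ ?_⟩
  obtain ⟨φ, rfl⟩ := hE.baer.extension_property f hf φ
  exact hyf φ

lemma exists_finset_injective_pi [IsArtinian R M] (hE : IsInjectiveCogenerator R E) :
    ∃ s : Finset (M →ₗ[R] E), Injective (LinearMap.pi fun φ : s ↦ (φ : M →ₗ[R] E)) := by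
  obtain ⟨s, hs⟩ := Finset.exists_inf_le fun φ : M →ₗ[R] E ↦ LinearMap.ker φ
  refine ⟨s, (injective_iff_map_eq_zero _).mpr fun x hx ↦ ?_⟩
  have hxs : x ∈ s.inf fun φ ↦ LinearMap.ker φ :=
    Submodule.mem_finsetInf.mpr fun φ hφ ↦ congrFun hx ⟨φ, hφ⟩
  exact hE.injective_biduality (LinearMap.ext fun φ ↦ (hs φ hxs).trans (map_zero φ).symm)

lemma strictAnti_coannihilator (hE : IsInjectiveCogenerator R E)
    (hM : Surjective (biduality R M E)) :
    StrictAnti (coannihilator : Submodule R (M →ₗ[R] E) → Submodule R M) := by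
  have le_of_le {S T : Submodule R (M →ₗ[R] E)} (h : coannihilator S ≤ coannihilator T) :
      T ≤ S := by
    refine fun φ hφ ↦ hE.mem_of_forall_apply_eq_zero fun ψ hψ ↦ ?_
    obtain ⟨x, rfl⟩ := hM ψ
    exact mem_coannihilator.mp (h (mem_coannihilator.mpr hψ)) φ hφ
  have antitone : Antitone (coannihilator : Submodule R (M →ₗ[R] E) → Submodule R M) :=
    fun S T h ↦ biInf_mono h
  exact fun S T h ↦ (antitone h.le).lt_of_not_ge fun h' ↦ h.not_ge (le_of_le h')

lemma isArtinian_dual_of_isNoetherian [IsNoetherian R M] (hE : IsInjectiveCogenerator R E)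
    (hM : Surjective (biduality R M E)) : IsArtinian R (M →ₗ[R] E) :=
  (hE.strictAnti_coannihilator hM).wellFoundedLT

lemma isNoetherian_dual_of_isArtinian [IsArtinian R M] (hE : IsInjectiveCogenerator R E)
    (hM : Surjective (biduality R M E)) : IsNoetherian R (M →ₗ[R] E) :=
  isNoetherian_iff'.mpr (hE.strictAnti_coannihilator hM).wellFoundedGT

end IsInjectiveCogenerator

end Cogenerator

section Hull

lemma isFiniteLength_quotient_maximalIdeal_pow (R : Type*) [CommRing R] [IsLocalRing R]
    [IsNoetherianRing R] (n : ℕ) : IsFiniteLength R (R ⧸ maximalIdeal R ^ n) := by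
  rcases subsingleton_or_nontrivial (R ⧸ maximalIdeal R ^ n) with _ | _
  · exact .of_subsingleton
  have := IsLocalRing.of_surjective' (Ideal.Quotient.mk (maximalIdeal R ^ n))
    Ideal.Quotient.mk_surjective
  have hnil : IsNilpotent (maximalIdeal (R ⧸ maximalIdeal R ^ n)) := by
    refine ⟨n, ?_⟩
    rw [← map_maximalIdeal_of_surjective _
      (Ideal.Quotient.mk_surjective (I := maximalIdeal R ^ n)), ← Ideal.map_pow]
    exact Ideal.map_quotient_self _
  have := isArtinianRing_iff_isNilpotent_maximalIdeal _ |>.mpr hnil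
  exact isFiniteLength_iff_isNoetherian_isArtinian.mpr ⟨inferInstance,
    isArtinian_of_surjective_algebraMap (Ideal.Quotient.mk_surjective (I := maximalIdeal R ^ n))⟩

variable {R M E : Type*} [CommRing R] [AddCommGroup M] [Module R M] [AddCommGroup E] [Module R E]

instance isSimpleModule_quotient (m : Ideal R) [hm : m.IsMaximal] : IsSimpleModule R (R ⧸ m) :=
  isSimpleModule_iff_isCoatom.mpr hm.out

namespace IsInjectiveHull

lemma surjective_biduality_quotient {m : Ideal R} [m.IsMaximal] {e : (R ⧸ m) →ₗ[R] E}
    (he : IsInjectiveHull e) : Surjective (biduality R (R ⧸ m) E) := by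
  intro ψ
  let T : (R ⧸ m) →ₗ[R] (R ⧸ m) →ₗ[R] E := (LinearMap.mul R (R ⧸ m)).compr₂ e
  have T_surjective : Surjective T := by
    intro φ
    obtain ⟨c, hc⟩ := he.range_le_range φ ⟨1, rfl⟩
    exact ⟨c, Submodule.linearMap_qext _ (LinearMap.ext_ring (by simpa [T] using hc))⟩
  obtain ⟨x, hx⟩ := he.range_le_range (ψ ∘ₗ T) ⟨1, rfl⟩
  refine ⟨x, LinearMap.ext fun φ ↦ ?_⟩
  obtain ⟨c, rfl⟩ := T_surjective φ
  obtain ⟨r, rfl⟩ := Ideal.Quotient.mk_surjective c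
  have hr : (Ideal.Quotient.mk m r : R ⧸ m) = r • 1 := by simp [Algebra.smul_def]
  simpa [T, hr] using congrArg (r • ·) hx

variable [IsLocalRing R] {e : (R ⧸ maximalIdeal R) →ₗ[R] E}

lemma isInjectiveCogenerator (he : IsInjectiveHull e) : IsInjectiveCogenerator R E where
  baer := he.baer
  exists_injective m hm := by
    obtain rfl := eq_maximalIdeal hm
    exact ⟨e, he.injective⟩

lemma surjective_biduality_of_isSimpleModule [IsSimpleModule R M] (he : IsInjectiveHull e) :
    Surjective (biduality R M E) := by
  obtain ⟨m, hm, ⟨u⟩⟩ := isSimpleModule_iff_quot_maximal.mp ‹IsSimpleModule R M›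
  obtain rfl := eq_maximalIdeal hm
  exact surjective_biduality_of_surjective he.baer u.symm.surjective
    he.surjective_biduality_quotient

lemma surjective_biduality_of_isFiniteLength (hM : IsFiniteLength R M) (he : IsInjectiveHull e) :
    Surjective (biduality R M E) := by
  induction hM with
  | of_subsingleton => exact fun ψ ↦ ⟨0, Subsingleton.elim _ _⟩
  | @of_simple_quotient M _ _ N _ _ ih =>
    exact surjective_biduality_of_exact he.baer (LinearMap.exact_subtype_mkQ N) N.mkQ_surjective ih
      he.surjective_biduality_of_isSimpleModule

lemma exists_pow_smul_eq_bot [IsNoetherianRing R] (he : IsInjectiveHull e) {N : Submodule R E}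
    (hN : N.FG) : ∃ n : ℕ, maximalIdeal R ^ n • N = ⊥ := by
  by_contra! h
  have : Module.Finite R N := Module.Finite.iff_fg.mpr hN
  have hle (n : ℕ) : LinearMap.range e ≤ maximalIdeal R ^ n • N := he.range_le (h n)
  refine he.isAtom_range.1 (eq_bot_iff.mpr fun x hx ↦ ?_)
  have hxN : x ∈ N := Submodule.smul_le_right (hle 0 hx)
  have hmem : (⟨x, hxN⟩ : N) ∈ (⨅ n : ℕ, maximalIdeal R ^ n • ⊤ : Submodule R N) :=
    (Submodule.mem_iInf _).mpr fun n ↦ Submodule.mem_smul_top_iff _ _ _ |>.mpr (hle n hx)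
  rw [Ideal.iInf_pow_smul_eq_bot_of_isLocalRing _ (maximalIdeal.isMaximal R).ne_top] at hmem
  simpa using hmem

lemma exists_pow_le_ker [IsNoetherianRing R] (he : IsInjectiveHull e) (φ : R →ₗ[R] E) :
    ∃ n : ℕ, maximalIdeal R ^ n ≤ LinearMap.ker φ := by
  obtain ⟨n, hn⟩ := he.exists_pow_smul_eq_bot (N := LinearMap.range φ)
    (LinearMap.range_eq_map φ ▸ (Module.Finite.fg_top).map φ)
  refine ⟨n, fun r hr ↦ ?_⟩
  have : r • φ 1 ∈ maximalIdeal R ^ n • LinearMap.range φ :=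
    Submodule.smul_mem_smul hr ⟨1, rfl⟩
  simpa [hn, ← map_smul] using this

lemma surjective_biduality_self [IsNoetherianRing R] [IsPrecomplete (maximalIdeal R) R]
    (he : IsInjectiveHull e) : Surjective (biduality R R E) := by
  intro ψ
  have hE := he.isInjectiveCogenerator
  have approx (n : ℕ) : ∃ a : R, ∀ φ : R →ₗ[R] E, maximalIdeal R ^ n ≤ LinearMap.ker φ →
      ψ φ = φ a := by
    obtain ⟨z, hz⟩ := he.surjective_biduality_of_isFiniteLength
      (isFiniteLength_quotient_maximalIdeal_pow R n) (ψ ∘ₗ (maximalIdeal R ^ n).mkQ.lcomp R E)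
    obtain ⟨a, rfl⟩ := Submodule.mkQ_surjective _ z
    refine ⟨a, fun φ hφ ↦ ?_⟩
    exact (LinearMap.congr_fun hz ((maximalIdeal R ^ n).liftQ φ hφ)).symm
  choose a ha using approx
  have cauchy {k l : ℕ} (hkl : k ≤ l) :
      a k ≡ a l [SMOD (maximalIdeal R ^ k • ⊤ : Submodule R R)] := by
    rw [smul_eq_mul, Ideal.mul_top]
    refine SModEq.sub_mem.mpr (hE.mem_of_forall_apply_eq_zero fun φ hφ ↦ ?_)
    rw [map_sub, ← ha k φ hφ, ← ha l φ ((Ideal.pow_le_pow_right hkl).trans hφ), sub_self]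
  obtain ⟨L, hL⟩ := IsPrecomplete.prec' a cauchy
  refine ⟨L, LinearMap.ext fun φ ↦ ?_⟩
  obtain ⟨n, hn⟩ := he.exists_pow_le_ker φ
  have hLn : a n - L ∈ maximalIdeal R ^ n := by simpa using SModEq.sub_mem.mp (hL n)
  calc φ L = φ (a n) := (sub_eq_zero.mp (by rw [← map_sub]; exact hn hLn)).symm
    _ = ψ φ := (ha n φ hn).symm

lemma surjective_biduality_hull [IsNoetherianRing R] [IsPrecomplete (maximalIdeal R) R]
    (he : IsInjectiveHull e) : Surjective (biduality R E E) :=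
  surjective_biduality_of_surjective he.baer (LinearMap.ringLmapEquivSelf R R E).surjective
    (surjective_biduality_dual he.surjective_biduality_self)

lemma surjective_biduality_of_finite [IsNoetherianRing R] [IsPrecomplete (maximalIdeal R) R]
    [Module.Finite R M] (he : IsInjectiveHull e) : Surjective (biduality R M E) := by
  obtain ⟨n, f, hf⟩ := Module.Finite.exists_fin' R M
  exact surjective_biduality_of_surjective he.baer hf
    (surjective_biduality_pi he.surjective_biduality_self)

lemma surjective_biduality_of_isArtinian [IsNoetherianRing R] [IsPrecomplete (maximalIdeal R) R]
    [IsArtinian R M] (he : IsInjectiveHull e) : Surjective (biduality R M E) := by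
  obtain ⟨s, hs⟩ := he.isInjectiveCogenerator.exists_finset_injective_pi (M := M)
  exact he.isInjectiveCogenerator.surjective_biduality_of_injective hs
    (surjective_biduality_pi he.surjective_biduality_hull)

end IsInjectiveHull

end Hull

section Complete

lemma isPrecomplete_of_surjective {R M N : Type*} [CommRing R] [AddCommGroup M] [Module R M]
    [AddCommGroup N] [Module R N] (I : Ideal R) [IsPrecomplete I M] {f : M →ₗ[R] N}
    (hf : Surjective f) : IsPrecomplete I N := by
  refine AdicCompletion.of_surjective_iff.mp fun y ↦ ?_
  obtain ⟨y, rfl⟩ := AdicCompletion.map_surjective I hf y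
  obtain ⟨x, rfl⟩ := AdicCompletion.of_surjective I M y
  exact ⟨f x, (AdicCompletion.map_of I f x).symm⟩

lemma isPrecomplete_maximalIdeal_of_surjective {R S : Type*} [CommRing R] [IsLocalRing R]
    [CommRing S] [IsLocalRing S] [IsPrecomplete (maximalIdeal R) R] {f : R →+* S}
    (hf : Surjective f) : IsPrecomplete (maximalIdeal S) S := by
  let := f.toAlgebra
  rw [← map_maximalIdeal_of_surjective f hf]
  exact (IsPrecomplete.map_algebraMap_iff ..).mpr
    (isPrecomplete_of_surjective (maximalIdeal R) (f := Algebra.linearMap R S) hf)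

end Complete

section MvPowerSeries

open MvPowerSeries

variable {σ R K : Type*} [CommRing R] [Field K]

lemma mem_span_range_X_of_coeff_eq_zero (s : Finset σ) (φ : MvPowerSeries σ R)
    (h : ∀ d : σ →₀ ℕ, (∀ i ∈ s, d i = 0) → coeff d φ = 0) :
    φ ∈ Ideal.span (Set.range (X : σ → MvPowerSeries σ R)) := by
  classical
  induction s using Finset.induction_on generalizing φ with
  | empty =>
    rw [show φ = 0 from ext fun d ↦ by simpa using h d]
    exact zero_mem _
  | insert i s _ ih =>
    let g : MvPowerSeries σ R := fun d ↦ if d i = 0 then 0 else coeff d φ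
    have coeff_g (d : σ →₀ ℕ) : coeff d g = if d i = 0 then 0 else coeff d φ := rfl
    have hg : X i ∣ g := X_dvd_iff.mpr fun d hd ↦ by simp [coeff_g, hd]
    have hφg : φ - g ∈ Ideal.span (Set.range X) := by
      refine ih _ fun d hd ↦ ?_
      by_cases hdi : d i = 0
      · simpa [coeff_g, hdi] using h d (by simpa [hdi] using hd)
      · simp [coeff_g, hdi]
    exact (Submodule.sub_mem_iff_left _
      (Ideal.mem_of_dvd _ hg (Ideal.subset_span (Set.mem_range_self i)))).mp hφg

lemma span_range_X_eq_ker_constantCoeff [Finite σ] :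
    Ideal.span (Set.range X) = RingHom.ker (constantCoeff : MvPowerSeries σ R →+* R) := by
  have := Fintype.ofFinite σ
  apply le_antisymm
  · rw [Ideal.span_le]
    rintro _ ⟨i, rfl⟩
    exact constantCoeff_X i
  · intro φ hφ
    refine mem_span_range_X_of_coeff_eq_zero Finset.univ φ fun d hd ↦ ?_
    rw [show d = 0 from Finsupp.ext fun i ↦ hd i (Finset.mem_univ i)]
    exact hφ

lemma span_range_X_eq_maximalIdeal [Finite σ] :
    Ideal.span (Set.range X) = maximalIdeal (MvPowerSeries σ K) := by
  rw [span_range_X_eq_ker_constantCoeff]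
  exact eq_maximalIdeal <| RingHom.ker_isMaximal_of_surjective _
    fun a ↦ ⟨C a, constantCoeff_C a⟩

instance isPrecomplete_maximalIdeal_mvPowerSeries [Finite σ] :
    IsPrecomplete (maximalIdeal (MvPowerSeries σ K)) (MvPowerSeries σ K) := by
  rw [← span_range_X_eq_maximalIdeal]
  infer_instance

end MvPowerSeries

end Matlis

theorem stmt_5_general {R E : Type*} [CommRing R] [IsLocalRing R] [IsNoetherianRing R]
    [IsPrecomplete (maximalIdeal R) R] [AddCommGroup E] [Module R E]
    {e : (R ⧸ maximalIdeal R) →ₗ[R] E} (he : Matlis.IsInjectiveHull e)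
    (P : Type*) [AddCommGroup P] [Module R P] :
    (Module.Finite R P →
      IsArtinian R (P →ₗ[R] E) ∧ Bijective (Matlis.biduality R P E)) ∧
    (IsArtinian R P →
      Module.Finite R (P →ₗ[R] E) ∧ Bijective (Matlis.biduality R P E)) := by
  have hE := he.isInjectiveCogenerator
  refine ⟨fun _ ↦ ?_, fun _ ↦ ?_⟩
  · have hP : Surjective (Matlis.biduality R P E) := he.surjective_biduality_of_finite
    exact ⟨hE.isArtinian_dual_of_isNoetherian hP, hE.injective_biduality, hP⟩
  · have hP : Surjective (Matlis.biduality R P E) := he.surjective_biduality_of_isArtinian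
    have := hE.isNoetherian_dual_of_isArtinian hP
    exact ⟨inferInstance, hE.injective_biduality, hP⟩

/-- Matlis duality.  Let `K` be a field and
`A = K[[t₁,…,tₙ]]/I` a quotient of a formal power series ring (a complete
noetherian local ring), `m` its maximal ideal, and `E` an injective hull of `A/m`
(an injective module containing `A/m` as an essential submodule).
Then `M ↦ Hom_A(M, E)` is an anti-equivalence between finitely generated
`A`-modules and artinian `A`-modules: it sends finitely generated modules to
artinian ones and vice versa, and the natural biduality map is an isomorphism. -/
theorem stmt_5 (K : Type) [Field K] (n : ℕ) (I : Ideal (MvPowerSeries (Fin n) K))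
    [IsLocalRing (MvPowerSeries (Fin n) K ⧸ I)]
    [IsNoetherianRing (MvPowerSeries (Fin n) K ⧸ I)]
    (E : Type) [AddCommGroup E] [Module (MvPowerSeries (Fin n) K ⧸ I) E]
    -- `E` is injective:
    (hInj : Module.Injective (MvPowerSeries (Fin n) K ⧸ I) E)
    -- `E` contains `A/m` as an essential submodule (so it is an injective hull of `A/m`):
    (f : ((MvPowerSeries (Fin n) K ⧸ I) ⧸
            IsLocalRing.maximalIdeal (MvPowerSeries (Fin n) K ⧸ I))
          →ₗ[MvPowerSeries (Fin n) K ⧸ I] E)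
    (hf : Function.Injective f)
    (hess : ∀ N : Submodule (MvPowerSeries (Fin n) K ⧸ I) E, N ≠ ⊥ →
      ∃ y : E, y ≠ 0 ∧ y ∈ N ∧ y ∈ LinearMap.range f) :
    ∀ (P : Type) [AddCommGroup P] [Module (MvPowerSeries (Fin n) K ⧸ I) P],
      (Module.Finite (MvPowerSeries (Fin n) K ⧸ I) P →
        IsArtinian (MvPowerSeries (Fin n) K ⧸ I)
          (P →ₗ[MvPowerSeries (Fin n) K ⧸ I] E) ∧
        (∀ ψ : (P →ₗ[MvPowerSeries (Fin n) K ⧸ I] E)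
              →ₗ[MvPowerSeries (Fin n) K ⧸ I] E,
          ∃ x : P, ∀ φ, ψ φ = φ x) ∧
        (∀ x y : P, (∀ φ : P →ₗ[MvPowerSeries (Fin n) K ⧸ I] E, φ x = φ y) → x = y)) ∧
      (IsArtinian (MvPowerSeries (Fin n) K ⧸ I) P →
        Module.Finite (MvPowerSeries (Fin n) K ⧸ I)
          (P →ₗ[MvPowerSeries (Fin n) K ⧸ I] E) ∧
        (∀ ψ : (P →ₗ[MvPowerSeries (Fin n) K ⧸ I] E)
              →ₗ[MvPowerSeries (Fin n) K ⧸ I] E,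
          ∃ x : P, ∀ φ, ψ φ = φ x) ∧
        (∀ x y : P, (∀ φ : P →ₗ[MvPowerSeries (Fin n) K ⧸ I] E, φ x = φ y) → x = y)) := by
  intro P _ _
  have := Matlis.isPrecomplete_maximalIdeal_of_surjective (Ideal.Quotient.mk_surjective (I := I))
  have he := Matlis.isInjectiveHull_of_forall_exists_mem_range (.of_injective hInj) hf hess
  simpa only [Matlis.bijective_biduality_iff] using stmt_5_general he P
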